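/- arXiv:0811.4713 — 3 statements merged into one kernel-verified Lean document; each statement's English description precedes it below -/
import Mathlib

section
/- Let φ0 be the query on simple graphs given by φ0(x, y): x ≠ y and there exists a vertex z with z ≠ x, z ≠ y, z adjacent to x and z adjacent to y. Suppose that to every finite simple graph G of arboricity at most 2 there is assigned an injective labeling J_G : V(G) → List Bool, and there is a single decoder D : List Bool → List Bool → Bool (not depending on G) such that for every such G and all vertices x, y one has D (J_G x) (J_G y) = true if and only if φ0(x, y) holds in G. Then for every N there exist a finite simple graph G of arboricity at most 2 with ñ ≥ N vertices and a vertex x of G such that the length of J_G x is strictly greater than √(ñ/2) − 1. -/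
/-- A simple graph has arboricity at most 2 if its edge set is the union of the
edge sets of two forests (acyclic graphs) on the same vertex set. -/
def ArboricityAtMostTwo {V : Type*} (G : SimpleGraph V) : Prop :=
  ∃ F₁ F₂ : SimpleGraph V, F₁.IsAcyclic ∧ F₂.IsAcyclic ∧ G = F₁ ⊔ F₂

/-- The query `φ₀(x,y)`: `x ≠ y` and `x` and `y` have a common neighbor. -/
def Phi0 {V : Type*} (G : SimpleGraph V) (x y : V) : Prop :=
  x ≠ y ∧ ∃ z, z ≠ x ∧ z ≠ y ∧ G.Adj x z ∧ G.Adj z y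

/-!
Distinct graphs on `m` vertices need distinct adjacency labelings, and there are
`2 ^ (m choose 2)` graphs but fewer than `2 ^ (k * m)` labelings by words of length less than `k`.
So when `2 * k < m`, some graph has a label of length at least `k`.

Subdividing every edge turns an arbitrary graph into one of arboricity at most 2: assigning the two
halves of each edge to different forests leaves every subdivision vertex with at most one neighbor
in each. In the subdivision `φ₀` between original vertices is the old adjacency. Keeping a
subdivision vertex for non-edges as well puts all `m`-vertex graphs on the same
`m + (m choose 2) = (m + 1) choose 2` vertices; for `m = 2 * k + 1` this is
`(k + 1) * (2 * k + 1) < 2 * (k + 1) ^ 2`.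
-/

open Function

section Counting

variable {α : Type*}

lemma ncard_setOf_length_lt_lt_pow (hα : 2 ≤ Nat.card α) (k : ℕ) :
    {l : List α | l.length < k}.ncard < Nat.card α ^ k := by
  have : Finite α := Nat.finite_of_card_ne_zero (by lia)
  have := Fintype.ofFinite α
  rw [Nat.card_eq_fintype_card] at hα ⊢
  rw [Set.ncard_eq_toFinset_card _ (List.finite_length_lt α k)]
  set words := (List.finite_length_lt α k).toFinset
  calc
    words.card = ∑ i ∈ Finset.range k, {l ∈ words | l.length = i}.card :=
      Finset.card_eq_sum_card_fiberwise fun l hl ↦ by simpa [words] using hl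
    _ ≤ ∑ i ∈ Finset.range k, Fintype.card α ^ i :=
      Finset.sum_le_sum fun _ _ ↦ Finset.card_filter_length_eq_le
    _ < Fintype.card α ^ k := Nat.geomSum_lt hα fun _ ↦ Finset.mem_range.1

lemma exists_le_length_of_injective {ι A : Type*} [Finite A] [Nonempty A] {L : ι → A → List α}
    (hL : Injective L) (hα : 2 ≤ Nat.card α) {k : ℕ}
    (hι : (Nat.card α ^ k) ^ Nat.card A ≤ Nat.card ι) :
    ∃ i a, k ≤ (L i a).length := by
  by_contra! hshort
  have : Finite α := Nat.finite_of_card_ne_zero (by lia)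
  have : Finite {l : List α // l.length < k} := List.finite_length_lt α k
  let shortLabeling : ι → A → {l : List α // l.length < k} := fun i a ↦ ⟨L i a, hshort i a⟩
  have hinj : Injective shortLabeling := fun i j h ↦
    hL <| funext fun a ↦ congrArg Subtype.val (congrFun h a)
  have hcard : Nat.card ι ≤ {l : List α | l.length < k}.ncard ^ Nat.card A :=
    (Nat.card_le_card_of_injective _ hinj).trans_eq Nat.card_fun
  exact (hι.trans hcard).not_gt <|
    Nat.pow_lt_pow_left (ncard_setOf_length_lt_lt_pow hα k) Nat.card_pos.ne'

end Counting

section Adjacency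

variable {A : Type*}

/-- Graphs correspond to sets of unordered pairs of distinct vertices, via their edge sets. -/
def simpleGraphEquivSet : SimpleGraph A ≃ Set {e : Sym2 A // ¬ e.IsDiag} where
  toFun H := {e | e.1 ∈ H.edgeSet}
  invFun S := .fromEdgeSet (Subtype.val '' S)
  left_inv H := by
    ext a b
    simpa using H.ne_of_adj
  right_inv S := by
    ext e
    simp [e.2]

lemma natCard_simpleGraph [Finite A] :
    Nat.card (SimpleGraph A) = 2 ^ (Nat.card A).choose 2 := by
  rw [Nat.card_congr simpleGraphEquivSet, Set, Nat.card_fun, Sym2.natCard_subtype_not_diag]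
  simp

lemma exists_le_length_of_adj_decoder {k : ℕ} (hk : 2 * k < Nat.card A)
    (L : SimpleGraph A → A → List Bool) (D : List Bool → List Bool → Bool)
    (hD : ∀ H a b, D (L H a) (L H b) = true ↔ H.Adj a b) :
    ∃ H a, k ≤ (L H a).length := by
  obtain ⟨_, _⟩ : Nonempty A ∧ Finite A := Nat.card_pos_iff.1 (by lia)
  have hL : Injective L := fun H K h ↦ by
    ext a b
    rw [← hD, ← hD, h]
  refine exists_le_length_of_injective hL (by simp) ?_
  have hexp : k * Nat.card A ≤ (Nat.card A).choose 2 := by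
    rw [Nat.choose_two_right, Nat.le_div_iff_mul_le two_pos]
    calc
      k * Nat.card A * 2 = Nat.card A * (2 * k) := by ring
      _ ≤ Nat.card A * (Nat.card A - 1) := by gcongr; lia
  rw [natCard_simpleGraph, Nat.card_eq_fintype_card, Fintype.card_bool, ← pow_mul]
  exact Nat.pow_le_pow_right two_pos hexp

end Adjacency

section Forests

variable {V A B : Type*}

lemma isBridge_of_forall_adj_eq {G : SimpleGraph V} {v w : V} (hvw : v ≠ w)
    (h : ∀ u, G.Adj v u → u = w) : G.IsBridge s(v, w) := by
  refine SimpleGraph.not_reachable_of_neighborSet_left_eq_empty hvw ?_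
  refine Set.eq_empty_of_forall_notMem fun u hu ↦ ?_
  rw [SimpleGraph.mem_neighborSet, SimpleGraph.deleteEdges_adj] at hu
  exact hu.2 (by rw [h u hu.1, Set.mem_singleton_iff])

/-- The bipartite graph on the disjoint union of `A` and `B` given by a relation between them. -/
def bipartiteOfRel (r : A → B → Prop) : SimpleGraph (A ⊕ B) where
  Adj
    | .inl a, .inr b | .inr b, .inl a => r a b
    | _, _ => False
  symm := ⟨by rintro (_ | _) (_ | _) h <;> exact h⟩
  loopless := ⟨by rintro (_ | _) h <;> exact h⟩

lemma bipartiteOfRel_isAcyclic {r : A → B → Prop} (hr : Relator.LeftUnique r) :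
    (bipartiteOfRel r).IsAcyclic := by
  have hbridge {a b} (hab : r a b) : (bipartiteOfRel r).IsBridge s(.inr b, .inl a) := by
    refine isBridge_of_forall_adj_eq Sum.inr_ne_inl ?_
    rintro (a' | _) h
    · exact congrArg Sum.inl (hr h hab)
    · exact h.elim
  rw [SimpleGraph.isAcyclic_iff_forall_adj_isBridge]
  rintro (_ | _) (_ | _) h
  · exact h.elim
  · rw [Sym2.eq_swap]
    exact hbridge h
  · exact hbridge h
  · exact h.elim

lemma arboricityAtMostTwo_bipartiteOfRel {r : A → B → Prop} (f g : B → A)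
    (hfg : ∀ a b, r a b → a = f b ∨ a = g b) :
    ArboricityAtMostTwo (bipartiteOfRel r) := by
  refine ⟨bipartiteOfRel fun a b ↦ r a b ∧ a = f b, bipartiteOfRel fun a b ↦ r a b ∧ a = g b,
    bipartiteOfRel_isAcyclic fun _ _ _ h h' ↦ h.2.trans h'.2.symm,
    bipartiteOfRel_isAcyclic fun _ _ _ h h' ↦ h.2.trans h'.2.symm, ?_⟩
  ext (a | b) (a' | b') <;> simp only [bipartiteOfRel, SimpleGraph.sup_adj] <;> grind

end Forests

section Transport

variable {V W : Type*} {G : SimpleGraph V} {G' : SimpleGraph W}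

lemma ArboricityAtMostTwo.comap (hG : ArboricityAtMostTwo G') {f : V → W} (hf : Injective f) :
    ArboricityAtMostTwo (G'.comap f) := by
  obtain ⟨F₁, F₂, hF₁, hF₂, rfl⟩ := hG
  exact ⟨F₁.comap f, F₂.comap f, hF₁.of_comap ⟨f, hf⟩, hF₂.of_comap ⟨f, hf⟩, rfl⟩

lemma phi0_iff_commonNeighbors_nonempty {x y : V} :
    Phi0 G x y ↔ x ≠ y ∧ (G.commonNeighbors x y).Nonempty := by
  refine and_congr_right fun _ ↦ exists_congr fun z ↦ ⟨?_, ?_⟩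
  · rintro ⟨-, -, hxz, hzy⟩
    exact ⟨hxz, hzy.symm⟩
  · rintro ⟨hxz, hyz⟩
    exact ⟨hxz.ne', hyz.ne', hxz, hyz.symm⟩

lemma phi0_apply_iff (φ : G ≃g G') {x y : V} : Phi0 G' (φ x) (φ y) ↔ Phi0 G x y := by
  simp only [Phi0, φ.surjective.exists, φ.injective.ne_iff, φ.map_adj_iff]

end Transport

section Subdivision

variable {A : Type*}

/-- The 1-subdivision of `H`, encoding the adjacency of `H` in the query `φ₀`. There is a
subdivision vertex for every pair of distinct vertices of `H`, isolated when the pair is not an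
edge, so that the vertex set does not depend on `H`. -/
def paddedSubdivision (H : SimpleGraph A) : SimpleGraph (A ⊕ {e : Sym2 A // ¬ e.IsDiag}) :=
  bipartiteOfRel fun a e ↦ e.1 ∈ H.edgeSet ∧ a ∈ e.1

lemma natCard_sum_subtype_not_isDiag [Finite A] :
    Nat.card (A ⊕ {e : Sym2 A // ¬ e.IsDiag}) = (Nat.card A + 1).choose 2 := by
  rw [Nat.card_sum, Sym2.natCard_subtype_not_diag, Nat.choose_succ_succ', Nat.choose_one_right]

lemma arboricityAtMostTwo_paddedSubdivision (H : SimpleGraph A) :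
    ArboricityAtMostTwo (paddedSubdivision H) := by
  refine arboricityAtMostTwo_bipartiteOfRel (fun e ↦ e.1.out.1) (fun e ↦ e.1.out.2) ?_
  rintro a e ⟨-, ha⟩
  rwa [← Sym2.mem_iff, Sym2.mk, e.1.out_eq]

lemma phi0_paddedSubdivision_inl {H : SimpleGraph A} {a b : A} :
    Phi0 (paddedSubdivision H) (.inl a) (.inl b) ↔ H.Adj a b := by
  rw [phi0_iff_commonNeighbors_nonempty, Sum.inl_injective.ne_iff]
  constructor
  · rintro ⟨hab, _ | e, ha, hb⟩
    · exact ha.elim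
    · rw [← SimpleGraph.mem_edgeSet, ← (Sym2.mem_and_mem_iff hab).1 ⟨ha.2, hb.2⟩]
      exact ha.1
  · intro hab
    exact ⟨hab.ne, .inr ⟨s(a, b), hab.ne⟩, ⟨hab, Sym2.mem_mk_left a b⟩,
      ⟨hab, Sym2.mem_mk_right a b⟩⟩

end Subdivision

lemma exists_le_length_of_phi0_decoder {V : Type*} {m k : ℕ} (hk : 2 * k < m)
    (hV : Nat.card V = (m + 1).choose 2) (J : SimpleGraph V → V → List Bool)
    (D : List Bool → List Bool → Bool)
    (hD : ∀ G, ArboricityAtMostTwo G → ∀ x y, D (J G x) (J G y) = true ↔ Phi0 G x y) :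
    ∃ G x, ArboricityAtMostTwo G ∧ k ≤ (J G x).length := by
  have : Finite V := Nat.finite_of_card_ne_zero (hV ▸ (Nat.choose_pos (by lia)).ne')
  obtain ⟨e⟩ : Nonempty (V ≃ Fin m ⊕ {p : Sym2 (Fin m) // ¬ p.IsDiag}) := by
    rw [← Finite.card_eq, natCard_sum_subtype_not_isDiag, hV, Nat.card_fin]
  let G (H : SimpleGraph (Fin m)) : SimpleGraph V := (paddedSubdivision H).comap e
  let v (a : Fin m) : V := e.symm (.inl a)
  have hG (H : SimpleGraph (Fin m)) : ArboricityAtMostTwo (G H) :=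
    (arboricityAtMostTwo_paddedSubdivision H).comap e.injective
  have hphi (H : SimpleGraph (Fin m)) (a b : Fin m) : Phi0 (G H) (v a) (v b) ↔ H.Adj a b :=
    (phi0_apply_iff (SimpleGraph.Iso.comap e (paddedSubdivision H)).symm).trans
      phi0_paddedSubdivision_inl
  obtain ⟨H, a, ha⟩ := exists_le_length_of_adj_decoder (by rwa [Nat.card_fin])
    (fun H a ↦ J (G H) (v a)) D fun H a b ↦ (hD _ (hG H) _ _).trans (hphi H a b)
  exact ⟨G H, v a, hG H, ha⟩

lemma sqrt_half_choose_two_lt (k : ℕ) :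
    √(((2 * k + 2).choose 2 : ℕ) / 2 : ℝ) < k + 1 := by
  rw [Real.sqrt_lt' (by positivity), Nat.cast_choose_two]
  push_cast
  nlinarith [k.cast_nonneg (α := ℝ)]

theorem phi0_labeling_lower_bound_general
    (J : ∀ n : ℕ, SimpleGraph (Fin n) → Fin n → List Bool)
    (D : ℕ → List Bool → List Bool → Bool)
    (hD : ∀ (n : ℕ) (G : SimpleGraph (Fin n)), ArboricityAtMostTwo G →
      ∀ x y : Fin n, D n (J n G x) (J n G y) = true ↔ Phi0 G x y) :
    ∀ N : ℕ, ∃ (n : ℕ) (G : SimpleGraph (Fin n)) (x : Fin n),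
      N ≤ n ∧ ArboricityAtMostTwo G ∧
      Real.sqrt ((n : ℝ) / 2) - 1 < ((J n G x).length : ℝ) := by
  intro k
  let n := (2 * k + 2).choose 2
  obtain ⟨G, x, hG, hx⟩ := exists_le_length_of_phi0_decoder (k := k) (m := 2 * k + 1)
    (Nat.lt_succ_self _) (Nat.card_fin n) (J n) (D n) (hD n)
  have hkn : k ≤ n := by
    rw [show n = _ from Nat.choose_succ_succ' (2 * k + 1) 1, Nat.choose_one_right]
    lia
  refine ⟨n, G, x, hkn, hG, ?_⟩
  calc
    √((n : ℝ) / 2) - 1 < k := sub_lt_iff_lt_add.2 (sqrt_half_choose_two_lt k)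
    _ ≤ (J n G x).length := mod_cast hx

/-- Proposition 5.1: every labeling scheme supporting the query `φ₀` on graphs
of arboricity at most 2 requires, on some graphs with `ñ` vertices (with `ñ`
arbitrarily large), labels of length greater than `√(ñ/2) - 1`. -/
theorem phi0_labeling_lower_bound
    (J : ∀ (n : ℕ), SimpleGraph (Fin n) → Fin n → List Bool)
    (hJ : ∀ (n : ℕ) (G : SimpleGraph (Fin n)), ArboricityAtMostTwo G →
      Function.Injective (J n G))
    (D : List Bool → List Bool → Bool)
    (hD : ∀ (n : ℕ) (G : SimpleGraph (Fin n)), ArboricityAtMostTwo G →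
      ∀ x y : Fin n, D (J n G x) (J n G y) = true ↔ Phi0 G x y) :
    ∀ N : ℕ, ∃ (n : ℕ) (G : SimpleGraph (Fin n)) (x : Fin n),
      N ≤ n ∧ ArboricityAtMostTwo G ∧
      Real.sqrt ((n : ℝ) / 2) - 1 < ((J n G x).length : ℝ) :=
  phi0_labeling_lower_bound_general J (fun _ ↦ D) hD
end

section
/- For every k ≥ 1 and every n ≥ 2 there exists a decoder D : List Bool → List Bool → Bool such that: for every simple graph G on the vertex set Fin n whose edge set is the union of the edge sets of k forests, there exists an injective labeling J : Fin n → List Bool with (length of J x) ≤ (2k+1) · (⌊log₂ n⌋ + 2) for every vertex x, and such that for all vertices x, y: D (J x) (J y) = true if and only if x and y are adjacent in G. -/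
/-!
Root every component of a forest: each edge then joins a vertex to its parent, so a forest on `V` is
determined by a parent function `V → V`. Hence every union of forests indexed by `ι` is an induced
subgraph of one graph on `V × (ι → V)`, via `x ↦ (x, parents of x)`, and any injective encoding of
the vertices of that graph by binary strings of a fixed length yields a common decoder.
-/

section Forest

variable {V : Type*} {F : SimpleGraph V} {r s x y : V}

lemma penultimate_eq_or_penultimate_eq_of_adj (hF : F.IsAcyclic) (hrs : r = s) {p : F.Walk r x}
    {q : F.Walk s y} (hp : p.IsPath) (hq : q.IsPath) (hxy : F.Adj x y) :
    p.penultimate = y ∨ q.penultimate = x := by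
  subst hrs
  by_cases hx : x ∈ q.support
  · exact .inr (hF.eq_penultimate_of_adj_end hq hxy.symm hx).symm
  · have hy : y ∈ p.support := hF.mem_support_of_ne_mem_support_of_adj_of_isPath hp hq hxy hx
    exact .inl (hF.eq_penultimate_of_adj_end hp hxy hy).symm

lemma adj_penultimate_of_ne {p : F.Walk r x} (h : x ≠ p.penultimate) :
    F.Adj x p.penultimate := by
  have hp : ¬ p.Nil := by
    rintro ⟨⟩
    exact h rfl
  exact (p.adj_penultimate hp).symm

lemma exists_root (G : SimpleGraph V) :
    ∃ root : V → V, (∀ x, G.Reachable (root x) x) ∧ ∀ x y, G.Adj x y → root x = root y :=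
  ⟨fun x ↦ (G.connectedComponentMk x).out,
    fun x ↦ SimpleGraph.ConnectedComponent.exact (Quot.out_eq (G.connectedComponentMk x)),
    fun _ _ h ↦ congrArg Quot.out (SimpleGraph.ConnectedComponent.sound h.reachable)⟩

lemma exists_eq_fromRel_parent (hF : F.IsAcyclic) :
    ∃ parent : V → V, F = SimpleGraph.fromRel (parent · = ·) := by
  obtain ⟨root, hreach, hroot⟩ := exists_root F
  choose path hpath using fun x ↦ (hreach x).exists_isPath
  refine ⟨fun x ↦ (path x).penultimate, ?_⟩
  ext x y
  rw [SimpleGraph.fromRel_adj]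
  constructor
  · exact fun hxy ↦ ⟨hxy.ne,
      penultimate_eq_or_penultimate_eq_of_adj hF (hroot x y hxy) (hpath x) (hpath y) hxy⟩
  · rintro ⟨hne, rfl | rfl⟩
    · exact adj_penultimate_of_ne hne
    · exact (adj_penultimate_of_ne hne.symm).symm

end Forest

/-- An induced-universal graph for unions of forests on `V` indexed by `ι`. The vertex `(x, p)`
stands for the vertex `x` whose parent in the `i`-th forest is `p i`; a root is its own parent. -/
def parentGraph (V ι : Type*) : SimpleGraph (V × (ι → V)) :=
  SimpleGraph.fromRel fun a b ↦ ∃ i, a.2 i = b.1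

lemma nonempty_iSup_embedding_parentGraph {V ι : Type*} {F : ι → SimpleGraph V}
    (hF : ∀ i, (F i).IsAcyclic) : Nonempty ((⨆ i, F i) ↪g parentGraph V ι) := by
  choose parent hparent using fun i ↦ exists_eq_fromRel_parent (hF i)
  let f : V ↪ V × (ι → V) := ⟨fun x ↦ (x, fun i ↦ parent i x), fun _ _ h ↦ congrArg Prod.fst h⟩
  refine ⟨f, fun {x y} ↦ ?_⟩
  have hne : f x ≠ f y ↔ x ≠ y := f.injective.ne_iff
  simp only [parentGraph, hparent, SimpleGraph.fromRel_adj, hne, SimpleGraph.iSup_adj,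
    exists_and_left, exists_or]
  rfl

/-- `G` has an adjacency labeling for the decoder `D`: distinct binary labels of length at most `L`
from which `D` recovers adjacency in `G`. -/
def HasAdjacencyLabeling {V : Type*} (D : List Bool → List Bool → Bool) (L : ℕ)
    (G : SimpleGraph V) : Prop :=
  ∃ J : V → List Bool, Function.Injective J ∧ (∀ x, (J x).length ≤ L) ∧
    ∀ x y, D (J x) (J y) = true ↔ G.Adj x y

section Labeling

variable {V W : Type*} {D : List Bool → List Bool → Bool} {L L' : ℕ} {G : SimpleGraph V}
  {U : SimpleGraph W}

lemma HasAdjacencyLabeling.mono (hL : L ≤ L') (h : HasAdjacencyLabeling D L G) :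
    HasAdjacencyLabeling D L' G :=
  let ⟨J, hinj, hlen, hadj⟩ := h
  ⟨J, hinj, fun x ↦ (hlen x).trans hL, hadj⟩

lemma HasAdjacencyLabeling.of_embedding (f : G ↪g U) (h : HasAdjacencyLabeling D L U) :
    HasAdjacencyLabeling D L G :=
  let ⟨J, hinj, hlen, hadj⟩ := h
  ⟨J ∘ f, hinj.comp f.injective, fun x ↦ hlen (f x), fun _ _ ↦ (hadj _ _).trans f.map_adj_iff⟩

lemma exists_hasAdjacencyLabeling_of_card_le [Fintype W] (U : SimpleGraph W)
    (hW : Fintype.card W ≤ 2 ^ L) : ∃ D, HasAdjacencyLabeling D L U := by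
  classical
  obtain ⟨e⟩ : Nonempty (W ↪ List.Vector Bool L) :=
    Function.Embedding.nonempty_of_card_le (by simpa using hW)
  let J : W ↪ List Bool := e.trans (.subtype _)
  refine ⟨fun a b ↦ decide ((U.map J).Adj a b), J, J.injective, fun x ↦ (e x).2.le, fun x y ↦ ?_⟩
  rw [decide_eq_true_iff, SimpleGraph.map_adj_apply]

end Labeling

theorem arboricity_adjacency_labeling_scheme_general (V ι : Type*) [Fintype V] [Fintype ι] :
    ∃ D : List Bool → List Bool → Bool, ∀ F : ι → SimpleGraph V, (∀ i, (F i).IsAcyclic) →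
      HasAdjacencyLabeling D ((Fintype.card ι + 1) * Nat.clog 2 (Fintype.card V)) (⨆ i, F i) := by
  classical
  have hcard : Fintype.card (V × (ι → V)) ≤
      2 ^ ((Fintype.card ι + 1) * Nat.clog 2 (Fintype.card V)) := calc
    Fintype.card (V × (ι → V)) = Fintype.card V ^ (Fintype.card ι + 1) := by
      rw [Fintype.card_prod, Fintype.card_fun, pow_succ']
    _ ≤ (2 ^ Nat.clog 2 (Fintype.card V)) ^ (Fintype.card ι + 1) :=
      Nat.pow_le_pow_left (Nat.le_pow_clog one_lt_two _) _
    _ = 2 ^ ((Fintype.card ι + 1) * Nat.clog 2 (Fintype.card V)) := by rw [← pow_mul, mul_comm]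
  obtain ⟨D, hD⟩ := exists_hasAdjacencyLabeling_of_card_le (parentGraph V ι) hcard
  refine ⟨D, fun F hF ↦ ?_⟩
  obtain ⟨f⟩ := nonempty_iSup_embedding_parentGraph hF
  exact hD.of_embedding f

/-- The adjacency-query case of Theorem 5.1 (1): graphs on `Fin n` of arboricity
at most `k` admit an adjacency labeling scheme with labels of length
`O(k · log n)`, with a decoder common to all graphs of the class. -/
theorem arboricity_adjacency_labeling_scheme (k n : ℕ) (hk : 1 ≤ k) (hn : 2 ≤ n) :
    ∃ D : List Bool → List Bool → Bool,
      ∀ G : SimpleGraph (Fin n),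
        (∃ F : Fin k → SimpleGraph (Fin n), (∀ i, (F i).IsAcyclic) ∧
          ∀ x y : Fin n, G.Adj x y ↔ ∃ i, (F i).Adj x y) →
        ∃ J : Fin n → List Bool, Function.Injective J ∧
          (∀ x : Fin n, (J x).length ≤ (2 * k + 1) * (Nat.log 2 n + 2)) ∧
          ∀ x y : Fin n, (D (J x) (J y) = true ↔ G.Adj x y) := by
  have hclog : Nat.clog 2 n ≤ Nat.log 2 n + 1 :=
    Nat.clog_le_of_le_pow (Nat.lt_pow_succ_log_self one_lt_two n).le
  have hlen : (k + 1) * Nat.clog 2 n ≤ (2 * k + 1) * (Nat.log 2 n + 2) :=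
    Nat.mul_le_mul (by omega) (by omega)
  obtain ⟨D, hD⟩ := arboricity_adjacency_labeling_scheme_general (Fin n) (Fin k)
  simp only [Fintype.card_fin] at hD
  refine ⟨D, fun G ⟨F, hF, hG⟩ ↦ ?_⟩
  obtain rfl : G = ⨆ i, F i := by
    ext x y
    rw [hG, SimpleGraph.iSup_adj]
  exact (hD F hF).mono hlen
end

section
/- Let G be a simple graph, let U and U′ be subsets of its vertex set, let t ∈ ℕ, and suppose x ∈ K^{2t}(U) and y ∈ K^{2t}(U′), where K^{2t}(W) = { v ∈ W : N_G^{2t}(v) ⊆ W } and N_G^{2t}(v) is the set of vertices reachable from v by a walk of length at most 2t in G. Then there is a walk of length at most 2t from x to y in G if and only if there is a walk of length at most 2t from x to y in the induced subgraph G[U ∪ U′]. -/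
/-- The ball of radius `t` around `v`: vertices reachable from `v` by a walk of
length at most `t`. -/
def Ball {V : Type*} (G : SimpleGraph V) (t : ℕ) (v : V) : Set V :=
  {u | ∃ w : G.Walk v u, w.length ≤ t}

/-! Every vertex of a walk from `x` to `y` splits it into two parts, and at most one of them can be
long. So balls around the two ends whose radii together nearly reach the length of the walk cover
it, and a set containing both balls contains the whole walk. -/

open SimpleGraph

section

variable {V : Type*} {G : SimpleGraph V}

theorem walk_length_induce {S : Set V} {x y : V} (w : G.Walk x y) (hw : ∀ z ∈ w.support, z ∈ S) :
    (w.induce S hw).length = w.length :=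
  (Walk.length_map _ _).symm.trans (congrArg Walk.length (w.map_induce hw))

theorem mem_ball_union_ball_of_mem_support {x y : V} {m n : ℕ} (w : G.Walk x y)
    (hw : w.length ≤ m + n + 1) {z : V} (hz : z ∈ w.support) : z ∈ Ball G m x ∪ Ball G n y := by
  obtain ⟨p, q, rfl⟩ := Walk.mem_support_iff_exists_append.mp hz
  rw [Walk.length_append] at hw
  obtain hp | hq : p.length ≤ m ∨ q.length ≤ n := by lia
  · exact Or.inl ⟨p, hp⟩
  · exact Or.inr ⟨q.reverse, q.length_reverse.trans_le hq⟩

theorem walk_le_iff_walk_le_in_union_general {S : Set V} {x y : S} {k m n : ℕ}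
    (hx : Ball G m x ⊆ S) (hy : Ball G n y ⊆ S) (hk : k ≤ m + n + 1) :
    (∃ w : G.Walk (x : V) y, w.length ≤ k) ↔ ∃ w : (G.induce S).Walk x y, w.length ≤ k := by
  constructor
  · rintro ⟨w, hw⟩
    have hS : ∀ z ∈ w.support, z ∈ S := fun _ hz ↦
      Set.union_subset hx hy (mem_ball_union_ball_of_mem_support w (hw.trans hk) hz)
    exact ⟨w.induce S hS, (walk_length_induce w hS).trans_le hw⟩
  · rintro ⟨w, hw⟩
    exact ⟨w.map (Embedding.induce S).toHom, (w.length_map _).trans_le hw⟩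

end

/-- Claim 5.2 in the proof of Theorem 5.1 (5): if `x` is in the `2t`-kernel of
`U` and `y` in the `2t`-kernel of `U'`, then `d_G(x,y) ≤ 2t` iff
`d_{G[U ∪ U']}(x,y) ≤ 2t`. -/
theorem walk_le_iff_walk_le_in_union {V : Type*} (G : SimpleGraph V)
    (U U' : Set V) (t : ℕ) (x y : V)
    (hxU : x ∈ U) (hxK : Ball G (2 * t) x ⊆ U)
    (hyU' : y ∈ U') (hyK : Ball G (2 * t) y ⊆ U') :
    (∃ w : G.Walk x y, w.length ≤ 2 * t) ↔
      ∃ w : (G.induce (U ∪ U')).Walk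
        ⟨x, Set.mem_union_left _ hxU⟩ ⟨y, Set.mem_union_right _ hyU'⟩,
        w.length ≤ 2 * t :=
  walk_le_iff_walk_le_in_union_general (x := ⟨x, Or.inl hxU⟩) (y := ⟨y, Or.inr hyU'⟩)
    (Set.subset_union_of_subset_left hxK U') (Set.subset_union_of_subset_right hyK U) (by lia)
end
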